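/- Let R be a commutative ring, M an R-module, and φ : M → R an R-linear map. Suppose y ∈ M is such that φ(y) + 1 is a unit of R. Define x ▷ y = (φ(y) + 1)·x − φ(x)·y and z ▷⁻¹ y = (φ(y) + 1)⁻¹·(z + φ(z)·y). Then for every x ∈ M, (x ▷ y) ▷⁻¹ y = x. -/

import Mathlib

/-- The operation `x ▷ y = (φ(y) + 1) • x - φ(x) • y` on an `R`-module `M`. -/
def tri {R M : Type*} [CommRing R] [AddCommGroup M] [Module R M]
    (φ : M →ₗ[R] R) (x y : M) : M :=
  (φ y + 1) • x - φ x • y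

/-- The operation `z ▷⁻¹ y = (φ(y) + 1)⁻¹ • (z + φ(z) • y)` on an `R`-module `M`,
where `(φ(y) + 1)⁻¹` is `Ring.inverse (φ y + 1)` (the inverse when `φ(y) + 1` is a unit). -/
noncomputable def triInv {R M : Type*} [CommRing R] [AddCommGroup M] [Module R M]
    (φ : M →ₗ[R] R) (z y : M) : M :=
  Ring.inverse (φ y + 1) • (z + φ z • y)

theorem map_tri {R M : Type*} [CommRing R] [AddCommGroup M] [Module R M]
    (φ : M →ₗ[R] R) (x y : M) : φ (tri φ x y) = φ x :=
  calc
    φ (tri φ x y) = (φ y + 1) * φ x - φ x * φ y := by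
      simp only [tri, map_sub, map_smul, smul_eq_mul]
    _ = φ x := by ring

/-- Half of (Q2): if `φ(y) + 1` is a unit of `R`, then `(x ▷ y) ▷⁻¹ y = x`. -/
theorem tri_triInv {R M : Type*} [CommRing R] [AddCommGroup M] [Module R M]
    (φ : M →ₗ[R] R) (y : M) (hy : IsUnit (φ y + 1)) :
    ∀ x : M, triInv φ (tri φ x y) y = x := by
  intro x
  calc
    triInv φ (tri φ x y) y = Ring.inverse (φ y + 1) • (tri φ x y + φ x • y) := by
      rw [triInv, map_tri]
    _ = Ring.inverse (φ y + 1) • (φ y + 1) • x := by rw [tri, sub_add_cancel]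
    _ = x := by rw [smul_smul, Ring.inverse_mul_cancel _ hy, one_smul]
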